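/- Let k be a perfect field of characteristic p > 0, let R and S be standard graded rings over k of Krull dimensions d ≥ 2 and d' ≥ 2, and let I ⊆ R and J ⊆ S be homogeneous ideals of finite colength. Suppose f_n(R, I), f_n(S, J) and f_n(R ⊗_k S, I ⊠ J) converge uniformly on [0,∞) to compactly supported continuous functions, and that there exists A > 0 such that f_n(R, I), f_n(S, J) and f_n(R ⊗_k S, I ⊠ J) all vanish on [A, ∞) for every n. Then the limits e_1 = lim_n q^{-d} dim_k(R/I^{[q]}), e_2 = lim_n q^{-d'} dim_k(S/J^{[q]}) and e = lim_n q^{-(d+d')} dim_k((R ⊗_k S)/(I ⊠ J)^{[q]}) (q = p^n) all exist and satisfy e = e_1 · e_2. -/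

import Mathlib

/-!
The `q`-th power map (`q = p ^ n`) is a ring homomorphism in characteristic `p`, so `I^{[q]}` is
the extension of `I` along it. Hence Frobenius powers commute with extension of ideals and
`(I ⊠ J)^{[q]} = I^{[q]} ⊠ J^{[q]}` (`frobeniusPower_boxIdeal`), and therefore
`(R ⊗ S) / (I ⊠ J)^{[q]} ≅ R / I^{[q]} ⊗ S / J^{[q]}` (`finrank_quotient_boxIdeal`). Colengths are
thus multiplicative for every `q`, and both the existence of `e` and the identity `e = e₁ * e₂`
follow from the existence of `e₁` and `e₂`.

For the latter, `I^{[q]}` is homogeneous, so `dim R / I^{[q]}` is the sum of the dimensions of the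
graded pieces (`finrank_quotient_eq_sum`), and `q^{-d} dim R / I^{[q]}` is the Riemann sum of mesh
`1 / q` of the normalized Hilbert function. Uniform convergence to a uniformly continuous function
makes these sums converge to the integral of the limit (`tendsto_riemann_sum`).
-/

open scoped TensorProduct
open Filter MeasureTheory

/-- The Frobenius power `I^{[q]}`: the ideal generated by `q`-th powers of elements of `I`. -/
noncomputable def frobeniusPower {A : Type*} [CommRing A] (I : Ideal A) (q : ℕ) : Ideal A :=
  Ideal.span ((fun a => a ^ q) '' (I : Set A))

/-- A grading `𝒜` on a commutative `k`-algebra `R` is standard if `𝒜 0 = k·1`, the degree-one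
piece is finitely generated, and `𝒜 (m+1) = 𝒜 1 * 𝒜 m` for all `m`. -/
structure IsStandardGraded (k : Type*) {R : Type*} [Field k] [CommRing R] [Algebra k R]
    (𝒜 : ℕ → Submodule k R) : Prop where
  degree_zero : 𝒜 0 = 1
  fg_one : (𝒜 1).FG
  succ_eq : ∀ m : ℕ, 𝒜 (m + 1) = 𝒜 1 * 𝒜 m

/-- `dim_k` of the degree piece `P` of the quotient by `I`: the dimension of the image of `P`
in `A ⧸ I`. -/
noncomputable def quotPieceDim (k : Type*) [Field k] {A : Type*} [CommRing A] [Algebra k A]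
    (P : Submodule k A) (I : Ideal A) : ℕ :=
  Module.finrank k (P.map (Ideal.Quotient.mkₐ k I).toLinearMap)

/-- The normalized Hilbert function of the pair `(A, I)` (with grading `P`, Krull dimension `d`
and Frobenius power `q`), extended by `0` to the negative reals:
`x ↦ q^{1-d} · dim_k (A/I^{[q]})_{⌊qx⌋}`. -/
noncomputable def normHilb (k : Type*) [Field k] {A : Type*} [CommRing A] [Algebra k A]
    (P : ℕ → Submodule k A) (I : Ideal A) (d q : ℕ) : ℝ → ℝ :=
  fun x => if x < 0 then 0 else
    (q : ℝ) ^ ((1 : ℤ) - (d : ℤ)) * quotPieceDim k (P ⌊(q : ℝ) * x⌋₊) (frobeniusPower I q)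

/-- The degree-`m` piece of the tensor product grading on `R ⊗[k] S`:
`(R ⊗ S)_m = Σ_{i=0}^m R_i ⊗ S_{m-i}`. -/
noncomputable def tensorPiece (k : Type*) [Field k] {R S : Type*} [CommRing R] [CommRing S]
    [Algebra k R] [Algebra k S] (𝒜 : ℕ → Submodule k R) (ℬ : ℕ → Submodule k S) (m : ℕ) :
    Submodule k (R ⊗[k] S) :=
  ⨆ i ∈ Finset.range (m + 1),
    (𝒜 i).map (Algebra.TensorProduct.includeLeft : R →ₐ[k] R ⊗[k] S).toLinearMap *
      (ℬ (m - i)).map (Algebra.TensorProduct.includeRight : S →ₐ[k] R ⊗[k] S).toLinearMap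

/-- `I ⊠ J`: the ideal of `R ⊗[k] S` generated by the images of `I` and `J` under the
canonical inclusions. -/
noncomputable def boxIdeal (k : Type*) [Field k] {R S : Type*} [CommRing R] [CommRing S]
    [Algebra k R] [Algebra k S] (I : Ideal R) (J : Ideal S) : Ideal (R ⊗[k] S) :=
  I.map (Algebra.TensorProduct.includeLeft : R →ₐ[k] R ⊗[k] S) ⊔
    J.map (Algebra.TensorProduct.includeRight : S →ₐ[k] R ⊗[k] S)

/-! ### Frobenius powers -/

theorem frobeniusPower_eq_map {A : Type*} [CommRing A] (p : ℕ) [Fact p.Prime] [CharP A p]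
    (I : Ideal A) (n : ℕ) : frobeniusPower I (p ^ n) = I.map (iterateFrobenius A p n) := by
  rfl

theorem frobeniusPower_map {A B : Type*} [CommRing A] [CommRing B] (p : ℕ) [Fact p.Prime]
    [CharP A p] [CharP B p] (φ : A →+* B) (I : Ideal A) (n : ℕ) :
    frobeniusPower (I.map φ) (p ^ n) = (frobeniusPower I (p ^ n)).map φ := by
  rw [frobeniusPower_eq_map, frobeniusPower_eq_map, Ideal.map_map, Ideal.map_map]
  congr 1
  ext x
  simp [iterateFrobenius_def]

theorem frobeniusPower_boxIdeal {k : Type*} [Field k] {R S : Type*} [CommRing R] [CommRing S]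
    [Algebra k R] [Algebra k S] (p : ℕ) [Fact p.Prime] [CharP R p] [CharP S p]
    [CharP (R ⊗[k] S) p] (I : Ideal R) (J : Ideal S) (n : ℕ) :
    frobeniusPower (boxIdeal k I J) (p ^ n) =
      boxIdeal k (frobeniusPower I (p ^ n)) (frobeniusPower J (p ^ n)) := by
  have h₁ := frobeniusPower_map p
    (Algebra.TensorProduct.includeLeft : R →ₐ[k] R ⊗[k] S).toRingHom I n
  have h₂ := frobeniusPower_map p
    (Algebra.TensorProduct.includeRight : S →ₐ[k] R ⊗[k] S).toRingHom J n
  rw [frobeniusPower_eq_map] at h₁ h₂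
  rw [frobeniusPower_eq_map, boxIdeal, Ideal.map_sup]
  exact congrArg₂ (· ⊔ ·) h₁ h₂

theorem frobeniusPower_isHomogeneous {k : Type*} [Field k] {R : Type*} [CommRing R] [Algebra k R]
    (𝒜 : ℕ → Submodule k R) [GradedAlgebra 𝒜] (p : ℕ) [Fact p.Prime] [CharP R p]
    {I : Ideal R} (hI : I.IsHomogeneous 𝒜) (n : ℕ) :
    (frobeniusPower I (p ^ n)).IsHomogeneous 𝒜 := by
  obtain ⟨T, rfl⟩ := (Ideal.IsHomogeneous.iff_exists (𝒜 := 𝒜) I).1 hI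
  rw [frobeniusPower_eq_map, Ideal.map_span]
  refine Ideal.homogeneous_span 𝒜 _ ?_
  rintro _ ⟨_, ⟨x, -, rfl⟩, rfl⟩
  rw [iterateFrobenius_def]
  exact (x ^ p ^ n).2

/-! ### Dimensions of quotients -/

/-- The surjection `R ⊗ S → R/I ⊗ S/J` has kernel `I ⊠ J`. -/
theorem finrank_quotient_boxIdeal {k : Type*} [Field k] {R S : Type*} [CommRing R] [CommRing S]
    [Algebra k R] [Algebra k S] (I : Ideal R) (J : Ideal S) :
    Module.finrank k ((R ⊗[k] S) ⧸ boxIdeal k I J) =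
      Module.finrank k (R ⧸ I) * Module.finrank k (S ⧸ J) := by
  have hs₁ := Ideal.Quotient.mkₐ_surjective k I
  have hs₂ := Ideal.Quotient.mkₐ_surjective k J
  have hker := Algebra.TensorProduct.map_ker (Ideal.Quotient.mkₐ k I) (Ideal.Quotient.mkₐ k J)
    hs₁ hs₂
  have hI : RingHom.ker (Ideal.Quotient.mkₐ k I) = I := Ideal.Quotient.mkₐ_ker k I
  have hJ : RingHom.ker (Ideal.Quotient.mkₐ k J) = J := Ideal.Quotient.mkₐ_ker k J
  rw [hI, hJ] at hker
  have hs : Function.Surjective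
      (Algebra.TensorProduct.map (Ideal.Quotient.mkₐ k I) (Ideal.Quotient.mkₐ k J)) :=
    TensorProduct.map_surjective hs₁ hs₂
  have e := (Ideal.quotientEquivAlgOfEq k hker.symm).trans
    (Ideal.quotientKerAlgEquivOfSurjective hs)
  rw [← Module.finrank_tensorProduct]
  exact e.toLinearEquiv.finrank_eq

theorem IsStandardGraded.fg {k : Type*} [Field k] {R : Type*} [CommRing R] [Algebra k R]
    {𝒜 : ℕ → Submodule k R} (h : IsStandardGraded k 𝒜) (m : ℕ) : (𝒜 m).FG := by
  induction m with
  | zero => rw [h.degree_zero]; rw [Submodule.one_eq_span]; exact Submodule.fg_span_singleton 1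
  | succ m ih => rw [h.succ_eq]; exact h.fg_one.mul ih

/-- A quotient by a homogeneous ideal is the direct sum of the images of the graded pieces. -/
theorem finrank_quotient_eq_sum {k : Type*} [Field k] {R : Type*} [CommRing R] [Algebra k R]
    (𝒜 : ℕ → Submodule k R) [GradedAlgebra 𝒜] (hstd : IsStandardGraded k 𝒜)
    {I : Ideal R} (hI : I.IsHomogeneous 𝒜) (M : ℕ)
    (hM : ∀ m, M ≤ m → quotPieceDim k (𝒜 m) I = 0) :
    Module.finrank k (R ⧸ I) = ∑ m ∈ Finset.range M, quotPieceDim k (𝒜 m) I := by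
  classical
  let π : R →ₗ[k] R ⧸ I := (Ideal.Quotient.mkₐ k I).toLinearMap
  have hπ : ∀ x, π x = 0 ↔ x ∈ I := fun x => Ideal.Quotient.eq_zero_iff_mem
  have hfin : ∀ m, Module.Finite k ((𝒜 m).map π) :=
    fun m => Module.Finite.iff_fg.2 ((hstd.fg m).map π)
  have hbig : ∀ m, M ≤ m → ∀ x ∈ 𝒜 m, π x = 0 := fun m hm x hx => by
    have h0 : (𝒜 m).map π = ⊥ := Submodule.finrank_eq_zero.1 (hM m hm)
    have : π x ∈ (𝒜 m).map π := Submodule.mem_map_of_mem hx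
    rwa [h0, Submodule.mem_bot] at this
  let Ψ : ((m : Fin M) → (𝒜 m).map π) →ₗ[k] R ⧸ I :=
    ∑ m : Fin M, ((𝒜 m).map π).subtype ∘ₗ LinearMap.proj m
  have hΨ : ∀ v, Ψ v = ∑ m, (v m : R ⧸ I) := fun v => by simp [Ψ]
  have hbij : Function.Bijective Ψ := by
    constructor
    · rw [← LinearMap.ker_eq_bot, LinearMap.ker_eq_bot']
      intro v hv
      have hx : ∀ m : Fin M, ∃ x ∈ 𝒜 m, π x = v m := fun m => (v m).2
      choose x hx hxv using hx
      have hsum : ∑ m, x m ∈ I := by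
        rw [← hπ, map_sum]
        simpa [hxv, hΨ] using hv
      ext m
      have hm := hI (m : ℕ) hsum
      rw [DirectSum.decompose_sum, DFinsupp.finsetSum_apply, AddSubmonoidClass.coe_finsetSum,
        Finset.sum_eq_single m, DirectSum.decompose_of_mem_same _ (hx m), ← hπ, hxv] at hm
      · simpa using hm
      · intro j _ hj
        exact DirectSum.decompose_of_mem_ne _ (hx j) (fun h => hj (Fin.ext h))
      · simp
    · intro y
      obtain ⟨r, rfl⟩ := Ideal.Quotient.mkₐ_surjective k I y
      refine ⟨fun m => ⟨π (DirectSum.decompose 𝒜 r m), Submodule.mem_map_of_mem (Subtype.prop _)⟩, ?_⟩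
      rw [hΨ]
      change _ = π r
      conv_rhs => rw [← DirectSum.sum_support_decompose 𝒜 r, map_sum]
      simp only
      rw [Fin.sum_univ_eq_sum_range (fun m => π (DirectSum.decompose 𝒜 r m : R)) M]
      -- Both sums agree with the sum over the larger index set `range M ∪ support`.
      trans ∑ m ∈ Finset.range M ∪ (DirectSum.decompose 𝒜 r).support,
        π (DirectSum.decompose 𝒜 r m : R)
      · refine Finset.sum_subset Finset.subset_union_left fun m _ hm => ?_
        exact hbig m (by simpa using hm) _ (Subtype.prop _)
      · refine (Finset.sum_subset Finset.subset_union_right fun m _ hm => ?_).symm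
        rw [DFinsupp.notMem_support_iff.1 hm]
        simp
  rw [← (LinearEquiv.ofBijective Ψ hbij).finrank_eq, Module.finrank_pi_fintype,
    ← Fin.sum_univ_eq_sum_range]
  rfl

/-! ### Riemann sums -/

/-- If `F n → f` uniformly, the left Riemann sums of `F n` of mesh `1 / Q n → 0` converge to the
integral of `f`. -/
theorem tendsto_riemann_sum {F : ℕ → ℝ → ℝ} {f : ℝ → ℝ} (hfc : Continuous f)
    (hfs : HasCompactSupport f) (hF : TendstoUniformlyOn F f atTop (Set.Ici 0))
    {Q : ℕ → ℕ} (hQ : Tendsto Q atTop atTop) (hQ0 : ∀ n, 0 < Q n) (B : ℕ) :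
    Tendsto (fun n => (Q n : ℝ)⁻¹ * ∑ m ∈ Finset.range (B * Q n), F n (m / Q n)) atTop
      (nhds (∫ x in (0 : ℝ)..B, f x)) := by
  have huc := hfs.uniformContinuous_of_continuous hfc
  rw [Metric.tendsto_nhds]
  intro ε hε
  obtain ⟨η, hη, hηB⟩ : ∃ η : ℝ, 0 < η ∧ B * (2 * η) < ε := by
    refine ⟨ε / (2 * (B + 1)), by positivity, ?_⟩
    have : (B : ℝ) * (2 * (ε / (2 * (B + 1)))) = ε * (B / (B + 1)) := by field_simp
    rw [this]
    exact mul_lt_of_lt_one_right hε ((div_lt_one (by positivity)).2 (by linarith))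
  obtain ⟨δ, hδ, hfδ⟩ := Metric.uniformContinuous_iff.1 huc η hη
  have hmesh : ∀ᶠ n in atTop, (Q n : ℝ)⁻¹ < δ :=
    (tendsto_inv_atTop_zero.comp (tendsto_natCast_atTop_atTop.comp hQ)).eventually_lt_const hδ
  filter_upwards [hmesh, Metric.tendstoUniformlyOn_iff.1 hF η hη] with n hn hFn
  have hq : (0 : ℝ) < Q n := Nat.cast_pos.2 (hQ0 n)
  set q : ℝ := (Q n : ℝ) with hqdef
  have hint : ∫ x in (0 : ℝ)..B, f x =
      ∑ m ∈ Finset.range (B * Q n), ∫ x in ((m : ℕ) / q : ℝ)..((m + 1 : ℕ) / q : ℝ), f x := by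
    rw [intervalIntegral.sum_integral_adjacent_intervals
      (fun m _ => hfc.intervalIntegrable _ _)]
    congr 1
    · simp
    · push_cast
      rw [← hqdef]
      field_simp
  have hlen : ∀ m : ℕ, ((m + 1 : ℕ) / q : ℝ) - m / q = q⁻¹ := fun m => by
    push_cast; field_simp; ring
  have hpiece : ∀ m : ℕ, ‖q⁻¹ * F n (m / q) - ∫ x in ((m : ℕ) / q : ℝ)..((m + 1 : ℕ) / q : ℝ), f x‖
      ≤ 2 * η * q⁻¹ := by
    intro m
    have hc : q⁻¹ * F n (m / q) = ∫ _ in ((m : ℕ) / q : ℝ)..((m + 1 : ℕ) / q : ℝ), F n (m / q) := by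
      rw [intervalIntegral.integral_const, hlen, smul_eq_mul]
    rw [hc, ← intervalIntegral.integral_sub (by simp) (hfc.intervalIntegrable _ _)]
    have hle : ((m : ℕ) / q : ℝ) ≤ ((m + 1 : ℕ) / q : ℝ) := by
      have := hlen m
      have := inv_pos.2 hq
      linarith
    refine (intervalIntegral.norm_integral_le_of_norm_le_const (C := 2 * η) ?_).trans ?_
    · intro x hx
      rw [Set.uIoc_of_le hle] at hx
      have h1 := hFn (m / q) (by simp only [Set.mem_Ici]; positivity)
      have h2 : dist (f x) (f (m / q)) < η := by
        refine hfδ ?_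
        rw [Real.dist_eq, abs_of_nonneg (by linarith [hx.1])]
        linarith [hx.2, hlen m]
      rw [Real.dist_eq] at h1 h2
      rw [Real.norm_eq_abs]
      rw [abs_lt] at h1 h2
      rw [abs_le]
      constructor <;> linarith [h1.1, h1.2, h2.1, h2.2]
    · rw [hlen, abs_of_pos (inv_pos.2 hq)]
  rw [dist_eq_norm, hint, Finset.mul_sum, ← Finset.sum_sub_distrib]
  refine (norm_sum_le_of_le _ fun m _ => hpiece m).trans_lt ?_
  rw [Finset.sum_const, Finset.card_range, nsmul_eq_mul]
  push_cast
  rw [← hqdef]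
  calc (B : ℝ) * q * (2 * η * q⁻¹) = B * (2 * η) := by field_simp
    _ < ε := hηB

/-- The normalized colengths `q^{-d} dim_k R/I^{[q]}` are exactly Riemann sums of the normalized
Hilbert functions, hence converge to the integral of the limit function. -/
theorem exists_tendsto_colength {k : Type*} [Field k] {p : ℕ} [Fact p.Prime] {R : Type*}
    [CommRing R] [Algebra k R] [CharP R p] (𝒜 : ℕ → Submodule k R) [GradedAlgebra 𝒜]
    (hstd : IsStandardGraded k 𝒜) (d : ℕ) (I : Ideal R) (hI : I.IsHomogeneous 𝒜)
    (f : ℝ → ℝ) (hfc : Continuous f) (hfs : HasCompactSupport f)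
    (hfu : TendstoUniformlyOn (fun n => normHilb k 𝒜 I d (p ^ n)) f atTop (Set.Ici 0))
    (A : ℝ) (hvan : ∀ n : ℕ, ∀ x : ℝ, A ≤ x → normHilb k 𝒜 I d (p ^ n) x = 0) :
    ∃ e : ℝ, Tendsto (fun n => ((p : ℝ) ^ n) ^ (-(d : ℤ)) *
      (Module.finrank k (R ⧸ frobeniusPower I (p ^ n)) : ℝ)) atTop (nhds e) := by
  have hp : p.Prime := Fact.out
  have hq : ∀ n, (0 : ℝ) < (p ^ n : ℕ) := fun n => Nat.cast_pos.2 (pow_pos hp.pos n)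
  have hval : ∀ n m : ℕ, normHilb k 𝒜 I d (p ^ n) (m / (p ^ n : ℕ)) =
      ((p ^ n : ℕ) : ℝ) ^ ((1 : ℤ) - d) * quotPieceDim k (𝒜 m) (frobeniusPower I (p ^ n)) := by
    intro n m
    have h0 : ¬ ((m : ℝ) / (p ^ n : ℕ) < 0) := not_lt.2 (by positivity)
    rw [normHilb, if_neg h0, mul_div_cancel₀ _ (hq n).ne', Nat.floor_natCast]
  obtain ⟨B, hB⟩ := exists_nat_ge A
  refine ⟨_, (tendsto_riemann_sum hfc hfs hfu (tendsto_pow_atTop_atTop_of_one_lt hp.one_lt)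
    (fun n => pow_pos hp.pos n) B).congr fun n => ?_⟩
  rw [finrank_quotient_eq_sum 𝒜 hstd (frobeniusPower_isHomogeneous 𝒜 p hI n) (B * p ^ n)]
  · simp only [hval]
    rw [← Finset.mul_sum, ← mul_assoc, ← zpow_neg_one, ← zpow_add₀ (hq n).ne']
    push_cast
    congr 2
    ring
  · intro m hm
    have h0 := hvan n (m / (p ^ n : ℕ)) (hB.trans (by
      rw [le_div_iff₀ (hq n)]
      exact_mod_cast hm))
    rw [hval] at h0
    have := (mul_eq_zero.1 h0).resolve_left (zpow_ne_zero _ (hq n).ne')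
    exact_mod_cast this

/-- **Corollary**: under the hypotheses of the tensor-product theorem (uniform convergence of
the normalized Hilbert functions of `(R, I)`, `(S, J)` and `(R ⊗_k S, I ⊠ J)` to compactly
supported continuous functions, with uniformly bounded supports), the Hilbert–Kunz limits
`e₁ = lim_n q^{-d} dim_k (R/I^{[q]})`, `e₂ = lim_n q^{-d'} dim_k (S/J^{[q]})` and
`e = lim_n q^{-(d+d')} dim_k ((R ⊗_k S)/(I ⊠ J)^{[q]})` all exist and `e = e₁ · e₂`. -/
theorem eHK_tensor_eq_mul {k : Type*} [Field k] [PerfectField k] {p : ℕ}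
    (hp : p.Prime) [CharP k p] {R S : Type*} [CommRing R] [CommRing S]
    [Algebra k R] [Algebra k S]
    (𝒜 : ℕ → Submodule k R) (ℬ : ℕ → Submodule k S) [GradedAlgebra 𝒜] [GradedAlgebra ℬ]
    (hstdR : IsStandardGraded k 𝒜) (hstdS : IsStandardGraded k ℬ)
    (d d' : ℕ) (hd : 2 ≤ d) (hd' : 2 ≤ d')
    (hdimR : ringKrullDim R = d) (hdimS : ringKrullDim S = d')
    (I : Ideal R) (J : Ideal S)
    (hIhom : Ideal.IsHomogeneous 𝒜 I) (hJhom : Ideal.IsHomogeneous ℬ J)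
    (hIcol : FiniteDimensional k (R ⧸ I)) (hJcol : FiniteDimensional k (S ⧸ J))
    (f g h : ℝ → ℝ)
    (hfc : Continuous f) (hfsupp : HasCompactSupport f)
    (hgc : Continuous g) (hgsupp : HasCompactSupport g)
    (hhc : Continuous h) (hhsupp : HasCompactSupport h)
    (hfu : TendstoUniformlyOn (fun n => normHilb k 𝒜 I d (p ^ n)) f atTop (Set.Ici 0))
    (hgu : TendstoUniformlyOn (fun n => normHilb k ℬ J d' (p ^ n)) g atTop (Set.Ici 0))
    (hhu : TendstoUniformlyOn
      (fun n => normHilb k (tensorPiece k 𝒜 ℬ) (boxIdeal k I J) (d + d') (p ^ n))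
      h atTop (Set.Ici 0))
    (A : ℝ) (hA : 0 < A)
    (hfvan : ∀ n : ℕ, ∀ x : ℝ, A ≤ x → normHilb k 𝒜 I d (p ^ n) x = 0)
    (hgvan : ∀ n : ℕ, ∀ x : ℝ, A ≤ x → normHilb k ℬ J d' (p ^ n) x = 0)
    (hhvan : ∀ n : ℕ, ∀ x : ℝ, A ≤ x →
      normHilb k (tensorPiece k 𝒜 ℬ) (boxIdeal k I J) (d + d') (p ^ n) x = 0) :
    ∃ e₁ e₂ e : ℝ,
      Tendsto (fun n => ((p : ℝ) ^ n) ^ (-(d : ℤ)) *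
          (Module.finrank k (R ⧸ frobeniusPower I (p ^ n)) : ℝ)) atTop (nhds e₁) ∧
      Tendsto (fun n => ((p : ℝ) ^ n) ^ (-(d' : ℤ)) *
          (Module.finrank k (S ⧸ frobeniusPower J (p ^ n)) : ℝ)) atTop (nhds e₂) ∧
      Tendsto (fun n => ((p : ℝ) ^ n) ^ (-((d : ℤ) + (d' : ℤ))) *
          (Module.finrank k ((R ⊗[k] S) ⧸ frobeniusPower (boxIdeal k I J) (p ^ n)) : ℝ))
        atTop (nhds e) ∧
      e = e₁ * e₂ := by
  have : Fact p.Prime := ⟨hp⟩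
  have hR : Nontrivial R := by
    by_contra hn
    have := not_nontrivial_iff_subsingleton.1 hn
    rw [ringKrullDim_eq_bot_of_subsingleton] at hdimR
    exact absurd hdimR.symm (WithBot.coe_ne_bot (a := ((d : ℕ) : ℕ∞)))
  have hS : Nontrivial S := by
    by_contra hn
    have := not_nontrivial_iff_subsingleton.1 hn
    rw [ringKrullDim_eq_bot_of_subsingleton] at hdimS
    exact absurd hdimS.symm (WithBot.coe_ne_bot (a := ((d' : ℕ) : ℕ∞)))
  have : CharP R p := charP_of_injective_algebraMap (algebraMap k R).injective p
  have : CharP S p := charP_of_injective_algebraMap (algebraMap k S).injective p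
  have : CharP (R ⊗[k] S) p := charP_of_injective_algebraMap (algebraMap k (R ⊗[k] S)).injective p
  obtain ⟨e₁, h₁⟩ := exists_tendsto_colength 𝒜 hstdR d I hIhom f hfc hfsupp hfu A hfvan
  obtain ⟨e₂, h₂⟩ := exists_tendsto_colength ℬ hstdS d' J hJhom g hgc hgsupp hgu A hgvan
  refine ⟨e₁, e₂, e₁ * e₂, h₁, h₂, (h₁.mul h₂).congr fun n => ?_, rfl⟩
  have hq : (p : ℝ) ^ n ≠ 0 := pow_ne_zero _ (Nat.cast_ne_zero.2 hp.ne_zero)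
  rw [frobeniusPower_boxIdeal, finrank_quotient_boxIdeal, neg_add, zpow_add₀ hq]
  push_cast
  ring
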